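/- For each integer n ≥ 3, let λ_n be the largest real root of the polynomial t^{2n−1} − 2t^{n} − 2t^{n−1} + 1 (such a root exists and satisfies λ_n > 1). Then lim_{n→∞} (2n − 1) · log λ_n = 2 · log(2 + √3). -/

import Mathlib

open Filter

/-- The clique polynomial `t^{2n-1} - 2t^n - 2t^{n-1} + 1` of the fibered class
`(1, n-1)₀`, as a real function. -/
noncomputable def Pfun (n : ℕ) (t : ℝ) : ℝ :=
  t ^ (2 * n - 1) - 2 * t ^ n - 2 * t ^ (n - 1) + 1

lemma Pfun_exp (m : ℕ) (u : ℝ) (h : Pfun (m + 1) (Real.exp u) = 0) :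
    Real.cosh ((2 * m + 1) * u / 2) = 2 * Real.cosh (u / 2) := by
  unfold Pfun at h
  have e1 : 2 * (m + 1) - 1 = 2 * m + 1 := by omega
  rw [e1, Nat.add_sub_cancel, ← Real.exp_nat_mul, ← Real.exp_nat_mul, ← Real.exp_nat_mul] at h
  push_cast at h
  set v := (2 * m + 1) * u / 2 with hv
  have a1 : (2 * (m : ℝ) + 1) * u = v + v := by rw [hv]; ring
  have a2 : ((m : ℝ) + 1) * u = v + u / 2 := by rw [hv]; ring
  have a3 : (m : ℝ) * u = v + -(u / 2) := by rw [hv]; ring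
  rw [a1, a2, a3, Real.exp_add, Real.exp_add, Real.exp_add] at h
  rw [Real.cosh_eq, Real.cosh_eq]
  have hE : Real.exp v * Real.exp (-v) = 1 := by rw [← Real.exp_add]; simp
  have hp := Real.exp_pos v
  apply mul_left_cancel₀ hp.ne'
  linear_combination h / 2 + hE / 2

lemma Pfun_pos (n : ℕ) (hn : 3 ≤ n) (t : ℝ) (ht : 4 ≤ t) : 0 < Pfun n t := by
  obtain ⟨m, rfl⟩ : ∃ m, n = m + 2 := ⟨n - 2, by omega⟩
  unfold Pfun
  have e1 : 2 * (m + 2) - 1 = (m + 1) + (m + 2) := by omega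
  have e2 : m + 2 - 1 = m + 1 := by omega
  rw [e1, e2, pow_add t (m + 1) (m + 2)]
  have h1 : 0 < t ^ (m + 1) := by positivity
  have h2 : 1 ≤ t ^ m := one_le_pow₀ (by linarith)
  have h3 : t ^ 2 ≤ t ^ (m + 2) := pow_le_pow_right₀ (by linarith) (by omega)
  have h4 : t ^ (m + 2) = t ^ (m + 1) * t := by ring
  have h5 : 0 < t ^ (m + 1) * (t ^ (m + 2) - 2 * t - 2) := by
    apply mul_pos h1; nlinarith
  nlinarith

lemma Pfun_cont (n : ℕ) : Continuous (Pfun n) := by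
  unfold Pfun; fun_prop

lemma Pfun_one (n : ℕ) : Pfun n 1 = -2 := by
  unfold Pfun; norm_num

lemma Pfun_root (n : ℕ) (hn : 3 ≤ n) :
    ∃ L : ℝ, 1 < L ∧ Pfun n L = 0 ∧ ∀ r : ℝ, Pfun n r = 0 → r ≤ L := by
  have hne : (0 : ℝ) ∈ Pfun n '' Set.Icc 1 4 := by
    apply intermediate_value_Icc (by norm_num) (Pfun_cont n).continuousOn
    exact ⟨by rw [Pfun_one]; norm_num, (Pfun_pos n hn 4 le_rfl).le⟩
  obtain ⟨x, hx, hx0⟩ := hne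
  have hK : IsCompact (Set.Icc (1 : ℝ) 4 ∩ Pfun n ⁻¹' {0}) :=
    isCompact_Icc.inter_right (isClosed_singleton.preimage (Pfun_cont n))
  obtain ⟨L, ⟨⟨hL, hL0⟩, hmax⟩⟩ := hK.exists_isGreatest ⟨x, hx, hx0⟩
  have hL0' : Pfun n L = 0 := hL0
  refine ⟨L, lt_of_le_of_ne hL.1 ?_, hL0', ?_⟩
  · rintro rfl
    rw [Pfun_one] at hL0'; norm_num at hL0'
  · intro r hr
    by_cases h1 : 1 ≤ r
    · apply hmax
      refine ⟨⟨h1, ?_⟩, hr⟩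
      by_contra h
      have := Pfun_pos n hn r (by linarith)
      linarith
    · linarith [hL.1]

theorem stmt14 :
    (∀ n : ℕ, 3 ≤ n →
      ∃ L : ℝ, 1 < L ∧ Pfun n L = 0 ∧ ∀ r : ℝ, Pfun n r = 0 → r ≤ L) ∧
    ∀ lam : ℕ → ℝ,
      (∀ n : ℕ, 3 ≤ n → Pfun n (lam n) = 0 ∧ ∀ r : ℝ, Pfun n r = 0 → r ≤ lam n) →
      Tendsto (fun n : ℕ => (2 * (n : ℝ) - 1) * Real.log (lam n)) atTop
        (nhds (2 * Real.log (2 + Real.sqrt 3))) := by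
  refine ⟨Pfun_root, fun lam hlam => ?_⟩
  have hlt : ∀ n, 3 ≤ n → 1 < lam n := fun n hn => by
    obtain ⟨L, h1, h2, _⟩ := Pfun_root n hn
    exact h1.trans_le ((hlam n hn).2 L h2)
  have hu0 : ∀ n, 3 ≤ n → 0 ≤ Real.log (lam n) := fun n hn => Real.log_nonneg (hlt n hn).le
  have hu4 : ∀ n, 3 ≤ n → Real.log (lam n) ≤ Real.log 4 := fun n hn => by
    apply Real.log_le_log (by linarith [hlt n hn])
    by_contra h
    have := Pfun_pos n hn (lam n) (by linarith)
    linarith [(hlam n hn).1]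
  have key : ∀ n : ℕ, 3 ≤ n → (2 * (n : ℝ) - 1) * Real.log (lam n)
      = 2 * Real.arcosh (2 * Real.cosh (Real.log (lam n) / 2)) := fun n hn => by
    obtain ⟨m, rfl⟩ : ∃ m, n = m + 1 := ⟨n - 1, by omega⟩
    have h0 := hu0 _ hn
    rw [← Pfun_exp m (Real.log (lam (m + 1)))
      (by rw [Real.exp_log (by linarith [hlt _ hn])]; exact (hlam _ hn).1),
      Real.arcosh_cosh (by positivity)]
    push_cast; ring
  have hlim : Tendsto (fun n => Real.log (lam n)) atTop (nhds 0) := by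
    have hC : ∀ n : ℕ, 3 ≤ n → Real.log (lam n) ≤
        2 * Real.arcosh (2 * Real.cosh (Real.log 4 / 2)) / (n : ℝ) := fun n hn => by
      have hn' : (3 : ℝ) ≤ n := by exact_mod_cast hn
      have h0 := hu0 n hn
      rw [le_div_iff₀ (by linarith)]
      have hc : Real.cosh (Real.log (lam n) / 2) ≤ Real.cosh (Real.log 4 / 2) := by
        rw [Real.cosh_le_cosh, abs_of_nonneg (by positivity), abs_of_nonneg (by positivity)]
        linarith [hu4 n hn]
      have hm : Real.arcosh (2 * Real.cosh (Real.log (lam n) / 2)) ≤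
          Real.arcosh (2 * Real.cosh (Real.log 4 / 2)) := by
        have := Real.one_le_cosh (Real.log (lam n) / 2)
        rw [Real.arcosh_le_arcosh] <;> linarith
      nlinarith [key n hn]
    refine tendsto_of_tendsto_of_tendsto_of_le_of_le' tendsto_const_nhds
      (tendsto_const_div_atTop_nhds_zero_nat _)
      (eventually_atTop.2 ⟨3, hu0⟩) (eventually_atTop.2 ⟨3, hC⟩)
  have hF : Tendsto (fun u : ℝ => 2 * Real.log (2 * Real.cosh (u / 2) +
      Real.sqrt ((2 * Real.cosh (u / 2)) ^ 2 - 1))) (nhds 0)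
      (nhds (2 * Real.log (2 + Real.sqrt 3))) := by
    have hc : ContinuousAt (fun u : ℝ => 2 * Real.log (2 * Real.cosh (u / 2) +
      Real.sqrt ((2 * Real.cosh (u / 2)) ^ 2 - 1))) 0 := by
      have h1 : 2 * Real.cosh ((0 : ℝ) / 2) +
        Real.sqrt ((2 * Real.cosh ((0 : ℝ) / 2)) ^ 2 - 1) ≠ 0 := by
        have := Real.cosh_pos ((0 : ℝ) / 2)
        positivity
      have h2 : Continuous (fun u : ℝ => 2 * Real.cosh (u / 2) +
        Real.sqrt ((2 * Real.cosh (u / 2)) ^ 2 - 1)) := by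
        have := Real.continuous_cosh
        fun_prop
      exact (h2.continuousAt.log h1).const_mul 2
    have := hc.tendsto
    simp only [zero_div, Real.cosh_zero] at this
    norm_num at this
    exact this
  refine (hF.comp hlim).congr' (eventually_atTop.2 ⟨3, fun n hn => ?_⟩)
  refine Eq.trans ?_ (key n hn).symm
  rfl
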